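/- Computable Catoni bound with a sampled prior hypothesis: For any probability measure D on Z, any loss ℓ : H × Z → [0,1], any prior density P on H, any measurable parametric function μ : H × Z^m → ℝ with finite positive Gibbs normalizer, any fixed c > 0, and any δ ∈ (0,1], with probability at least 1−δ over S ∼ D^m, h′ ∼ P, and h ∼ Q_S (Gibbs posterior for μ) one has R_D^ℓ(h) ≤ (1/(1−e^{−c}))·{ 1 − exp( −c·R_S^ℓ(h) − (1/m)·[ μ(h′,S) − μ(h,S) + ln(P(h′)/P(h)) + ln(4/δ²) ] ) }. -/

import Mathlib

open MeasureTheory ProbabilityTheory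

/-- The true risk `R_D^ℓ(h) = E_{z∼D} ℓ(h,z)`. -/
noncomputable def trueRisk {H Z : Type*} [MeasurableSpace Z]
    (D : Measure Z) (ℓ : H → Z → ℝ) (h : H) : ℝ :=
  ∫ z, ℓ h z ∂D

/-- The empirical risk `R_S^ℓ(h) = (1/m) Σ_{i=1}^m ℓ(h,z_i)`. -/
noncomputable def empRisk {H Z : Type*} {m : ℕ}
    (ℓ : H → Z → ℝ) (h : H) (S : Fin m → Z) : ℝ :=
  (∑ i, ℓ h (S i)) / m

lemma catoni_exp_le {c x : ℝ} (hx : x ∈ Set.Icc (0:ℝ) 1) :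
    Real.exp (-c * x) ≤ 1 - (1 - Real.exp (-c)) * x := by
  have h := convexOn_exp.2 (Set.mem_univ (-c)) (Set.mem_univ 0) hx.1
    (sub_nonneg.2 hx.2) (by ring)
  simp only [smul_eq_mul, mul_zero, add_zero, Real.exp_zero, mul_one] at h
  rw [mul_comm (-c) x]
  linarith

lemma catoni_mgf {Z : Type*} [MeasurableSpace Z] (D : Measure Z) [IsProbabilityMeasure D]
    (m : ℕ) (f : Z → ℝ) (hf : Measurable f) (hf01 : ∀ z, f z ∈ Set.Icc (0:ℝ) 1)
    (c : ℝ) (q : ℝ) (hq : 0 < q) (hqeq : q = 1 - (1 - Real.exp (-c)) * ∫ z, f z ∂D) :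
    ∫⁻ S : Fin m → Z, ENNReal.ofReal (∏ i, (Real.exp (-c * f (S i)) / q))
      ∂(Measure.pi (fun _ : Fin m => D)) ≤ 1 := by
  have hfi : Integrable f D := by
    refine Integrable.of_bound hf.aestronglyMeasurable 1 (ae_of_all _ fun z => ?_)
    rw [Real.norm_eq_abs, abs_of_nonneg (hf01 z).1]; exact (hf01 z).2
  have hlin : Integrable (fun z => 1 - (1 - Real.exp (-c)) * f z) D :=
    (integrable_const 1).sub (hfi.const_mul _)
  have hei : Integrable (fun z => Real.exp (-c * f z)) D := by
    refine hlin.mono' (by fun_prop) (ae_of_all _ fun z => ?_)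
    rw [Real.norm_eq_abs, abs_of_pos (Real.exp_pos _)]
    exact catoni_exp_le (hf01 z)
  have hle : ∫ z, Real.exp (-c * f z) / q ∂D ≤ 1 := by
    rw [integral_div, div_le_one hq, hqeq]
    calc _ ≤ ∫ z, (1 - (1 - Real.exp (-c)) * f z) ∂D :=
          integral_mono hei hlin fun z => catoni_exp_le (hf01 z)
      _ = _ := by
          rw [integral_sub (integrable_const 1) (hfi.const_mul _), integral_const_mul]
          simp
  have hint : Integrable (fun S : Fin m → Z => ∏ i, (Real.exp (-c * f (S i)) / q))
      (Measure.pi (fun _ : Fin m => D)) :=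
    Integrable.fintype_prod (f := fun _ z => Real.exp (-c * f z) / q) fun _ => hei.div_const q
  rw [← ofReal_integral_eq_lintegral_ofReal hint
    (ae_of_all _ fun S => Finset.prod_nonneg fun i _ => by positivity),
    integral_fintype_prod_eq_prod (f := fun _ z => Real.exp (-c * f z) / q)]
  rw [ENNReal.ofReal_le_one]
  exact Finset.prod_le_one (fun i _ => integral_nonneg fun z => by positivity) fun i _ => hle

lemma catoni_bad {m : ℕ} (hm : 0 < m) {c r R a b p p' δ W : ℝ} (hc : 0 < c)
    (hδ : 0 < δ) (hp : 0 < p) (hp' : 0 < p') (hW : 0 < W)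
    (hq : 0 < 1 - (1 - Real.exp (-c)) * R)
    (hbad : ¬ R ≤ (1 / (1 - Real.exp (-c))) *
              (1 - Real.exp (-c * r
                - (1/m) * (a - b + Real.log (p' / p) + Real.log (4/δ^2))))) :
    2 / δ ≤ Real.exp (-c * (m * r)) / (1 - (1 - Real.exp (-c)) * R) ^ m
        * p * W * Real.exp b + Real.exp (-a) / (p' * W) := by
  have h1 : 0 < 1 - Real.exp (-c) := by
    have : Real.exp (-c) < 1 := by rw [Real.exp_lt_one_iff]; linarith
    linarith
  rw [not_le, one_div, inv_mul_lt_iff₀ h1] at hbad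
  set q := 1 - (1 - Real.exp (-c)) * R with hqd
  set K := a - b + Real.log (p' / p) + Real.log (4/δ^2) with hK
  have h2 : q < Real.exp (-c * r - (1/m) * K) := by linarith
  have hm' : (m:ℝ) ≠ 0 := by positivity
  have h3 : q ^ m < Real.exp (-c * (m * r)) * Real.exp (-K) := by
    calc q ^ m < (Real.exp (-c * r - (1/m) * K)) ^ m := pow_lt_pow_left₀ h2 hq.le hm.ne'
      _ = _ := by
        rw [← Real.exp_nat_mul, ← Real.exp_add]; congr 1; field_simp; ring
  have hKe : Real.exp K = Real.exp a * (Real.exp b)⁻¹ * (p' / p) * (4/δ^2) := by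
    rw [hK, Real.exp_add, Real.exp_add, Real.exp_log (by positivity),
      Real.exp_log (by positivity), sub_eq_add_neg, Real.exp_add, Real.exp_neg b]
  have h4 : Real.exp K < Real.exp (-c * (m * r)) / q ^ m := by
    rw [lt_div_iff₀ (by positivity)]
    calc Real.exp K * q ^ m
        < Real.exp K * (Real.exp (-c * (m * r)) * Real.exp (-K)) := by gcongr
      _ = _ := by rw [Real.exp_neg K]; field_simp
  set M := Real.exp (-c * (m * r)) / q ^ m
  set A := M * p * W * Real.exp b with hA
  set B := Real.exp (-a) / (p' * W) with hB
  have hM : 0 < M := (Real.exp_pos _).trans h4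
  have hAp : 0 < A := by positivity
  have hBp : 0 < B := by positivity
  have hAB : (2/δ)^2 ≤ A * B := by
    have e1 : A * B = M * (p * Real.exp b / (p' * Real.exp a)) := by
      rw [hA, hB, Real.exp_neg]; field_simp
    have e2 : (2/δ)^2 = Real.exp K * (p * Real.exp b / (p' * Real.exp a)) := by
      rw [hKe]; field_simp; norm_num
    rw [e1, e2]; gcongr
  have h5 : (2/δ)^2 ≤ (A + B)^2 := by nlinarith
  exact (pow_le_pow_iff_left₀ (by positivity) (by positivity) two_ne_zero).1 h5

/-- **Computable Catoni bound with a sampled prior hypothesis.**  For any fixed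
`c > 0`, with probability at least `1−δ` over `S ∼ D^m`, `h′ ∼ P` and
`h ∼ Q_S` (Gibbs posterior for `μ`),
`R_D^ℓ(h) ≤ (1/(1−e^{−c}))·{1 − exp(−c·R_S^ℓ(h)
  − (1/m)·[μ(h′,S) − μ(h,S) + ln(P(h′)/P(h)) + ln(4/δ²)])}`. -/
theorem catoni_gibbs_posterior_computable_bound
    {Z H : Type*} [MeasurableSpace Z] [MeasurableSpace H]
    (m : ℕ) (hm : 0 < m)
    (D : Measure Z) [IsProbabilityMeasure D]
    (lam : Measure H) [SigmaFinite lam]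
    (ℓ : H → Z → ℝ) (hℓ : Measurable (Function.uncurry ℓ))
    (hℓ01 : ∀ h z, ℓ h z ∈ Set.Icc (0:ℝ) 1)
    (P : H → ℝ) (hPpos : ∀ h, 0 < P h) (hPmeas : Measurable P)
    (Pm : Measure H) [IsProbabilityMeasure Pm]
    (hPm : Pm = lam.withDensity fun h => ENNReal.ofReal (P h))
    (μ : H → (Fin m → Z) → ℝ) (hμ : Measurable (Function.uncurry μ))
    (hμint : ∀ S, Integrable (fun g => Real.exp (-(μ g S))) lam)
    (hZpos : ∀ S : Fin m → Z, 0 < ∫ g, Real.exp (-(μ g S)) ∂lam)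
    (κ : Kernel (Fin m → Z) H) [IsMarkovKernel κ]
    (hκ : ∀ S, κ S = lam.withDensity fun h =>
      ENNReal.ofReal (Real.exp (-(μ h S)) / ∫ g, Real.exp (-(μ g S)) ∂lam))
    (c : ℝ) (hc : 0 < c)
    (δ : ℝ) (hδ : δ ∈ Set.Ioc (0:ℝ) 1) :
    1 - ENNReal.ofReal δ ≤
      (Pm.prod (Measure.pi (fun _ : Fin m => D) ⊗ₘ κ))
        {p : H × ((Fin m → Z) × H) |
          trueRisk D ℓ p.2.2 ≤
            (1 / (1 - Real.exp (-c))) *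
              (1 - Real.exp (-c * empRisk ℓ p.2.2 p.2.1
                - (1/m) * (μ p.1 p.2.1 - μ p.2.2 p.2.1
                  + Real.log (P p.1 / P p.2.2) + Real.log (4/δ^2)))) } := by
  have h1 : 0 < 1 - Real.exp (-c) := by
    have : Real.exp (-c) < 1 := by rw [Real.exp_lt_one_iff]; linarith
    linarith
  have hδ0 : 0 < δ := hδ.1
  set ν := Measure.pi (fun _ : Fin m => D) with hν
  set W : (Fin m → Z) → ℝ := fun S => ∫ g, Real.exp (-(μ g S)) ∂lam with hWdef
  have hWm : Measurable W := by
    have : Measurable (Function.uncurry fun (g : H) (S : Fin m → Z) => Real.exp (-(μ g S))) :=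
      hμ.neg.exp
    exact (this.stronglyMeasurable.integral_prod_left (μ := lam)).measurable
  have hRm : Measurable (trueRisk D ℓ) :=
    (hℓ.stronglyMeasurable.integral_prod_right (ν := D)).measurable
  set q : H → ℝ := fun h => 1 - (1 - Real.exp (-c)) * trueRisk D ℓ h with hqdef
  have hqm : Measurable q := (hRm.const_mul _).const_sub _
  have hq : ∀ h, 0 < q h := by
    intro h
    have hR1 : trueRisk D ℓ h ≤ 1 := by
      have : trueRisk D ℓ h ≤ ∫ _, (1:ℝ) ∂D :=
        integral_mono_of_nonneg (ae_of_all _ fun z => (hℓ01 h z).1) (integrable_const 1)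
          (ae_of_all _ fun z => (hℓ01 h z).2)
      simpa using this
    have : 0 < Real.exp (-c) := Real.exp_pos _
    simp only [hqdef]
    nlinarith
  set M : H → (Fin m → Z) → ℝ := fun h S => ∏ i, (Real.exp (-c * ℓ h (S i)) / q h) with hMdef
  have hMpos : ∀ h S, 0 < M h S := fun h S =>
    Finset.prod_pos fun i _ => div_pos (Real.exp_pos _) (hq h)
  have hMm : Measurable (Function.uncurry M) := by
    refine Finset.measurable_fun_prod _ fun i _ => ?_
    refine Measurable.div (Real.measurable_exp.comp (Measurable.const_mul ?_ _))
      (hqm.comp measurable_fst)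
    exact hℓ.comp (measurable_fst.prodMk ((measurable_pi_apply i).comp measurable_snd))
  have hMS : ∀ h, ∫⁻ S, ENNReal.ofReal (M h S) ∂ν ≤ 1 := fun h =>
    catoni_mgf D m (ℓ h) (hℓ.comp measurable_prodMk_left) (hℓ01 h) c (q h) (hq h) rfl
  have hMeq : ∀ h S, M h S = Real.exp (-c * (m * empRisk ℓ h S)) / q h ^ m := by
    intro h S
    have hm' : (m:ℝ) ≠ 0 := by positivity
    simp only [hMdef, empRisk]
    rw [Finset.prod_div_distrib, ← Real.exp_sum, ← Finset.mul_sum, mul_div_cancel₀ _ hm']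
    simp
  set A : (Fin m → Z) × H → ENNReal := fun x =>
    ENNReal.ofReal (M x.2 x.1 * P x.2 * W x.1 * Real.exp (μ x.2 x.1)) with hA
  set B : H × (Fin m → Z) → ENNReal := fun x =>
    ENNReal.ofReal (Real.exp (-(μ x.1 x.2)) / (P x.1 * W x.2)) with hB
  have hμs : Measurable fun x : (Fin m → Z) × H => μ x.2 x.1 := hμ.comp measurable_swap
  have hMs : Measurable fun x : (Fin m → Z) × H => M x.2 x.1 := hMm.comp measurable_swap
  have hμ' : Measurable fun x : H × (Fin m → Z) => μ x.1 x.2 := hμ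
  have hAm : Measurable A := by
    refine ENNReal.measurable_ofReal.comp ?_
    exact ((hMs.mul (hPmeas.comp measurable_snd)).mul (hWm.comp measurable_fst)).mul hμs.exp
  have hBm : Measurable B := by
    refine ENNReal.measurable_ofReal.comp ?_
    exact hμ'.neg.exp.div ((hPmeas.comp measurable_fst).mul (hWm.comp measurable_snd))
  have hPm' : Measurable fun h => ENNReal.ofReal (P h) := hPmeas.ennreal_ofReal
  have hAint : ∫⁻ x, A x ∂(ν ⊗ₘ κ) ≤ 1 := by
    rw [Measure.lintegral_compProd hAm]
    have key : ∀ S, ∫⁻ h, A (S, h) ∂(κ S) = ∫⁻ h, ENNReal.ofReal (M h S) ∂Pm := by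
      intro S
      have hμS : Measurable fun h => μ h S := hμ.comp measurable_prodMk_right
      have hMSm : Measurable fun h => M h S := hMm.comp measurable_prodMk_right
      have hAS : Measurable fun h => A (S, h) := hAm.comp measurable_prodMk_left
      have hdens : Measurable fun h =>
          ENNReal.ofReal (Real.exp (-(μ h S)) / ∫ g, Real.exp (-(μ g S)) ∂lam) :=
        (hμS.neg.exp.div_const _).ennreal_ofReal
      rw [hκ S, hPm, lintegral_withDensity_eq_lintegral_mul _
        hdens hAS,
        lintegral_withDensity_eq_lintegral_mul _ hPm' hMSm.ennreal_ofReal]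
      refine lintegral_congr fun h => ?_
      have hW : 0 < W S := hZpos S
      simp only [Pi.mul_apply, hA]
      rw [← ENNReal.ofReal_mul (by positivity), ← ENNReal.ofReal_mul (hPpos h).le]
      congr 1
      change Real.exp (-(μ h S)) / W S * _ = _
      rw [Real.exp_neg]
      field_simp
    simp_rw [key]
    rw [lintegral_lintegral_swap (f := fun S h => ENNReal.ofReal (M h S))
      (hMs.ennreal_ofReal).aemeasurable]
    calc _ ≤ ∫⁻ _, 1 ∂Pm := lintegral_mono hMS
      _ = 1 := by simp
  have hBint : ∀ S, ∫⁻ h, B (h, S) ∂Pm ≤ 1 := by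
    intro S
    have hW : 0 < W S := hZpos S
    have hBS : Measurable fun h => B (h, S) := hBm.comp measurable_prodMk_right
    have : ∫⁻ h, B (h, S) ∂Pm = κ S Set.univ := by
      rw [hκ S, hPm, withDensity_apply _ MeasurableSet.univ, Measure.restrict_univ,
        lintegral_withDensity_eq_lintegral_mul _ hPm' hBS]
      refine lintegral_congr fun h => ?_
      have hp := hPpos h
      simp only [Pi.mul_apply, hB]
      rw [← ENNReal.ofReal_mul hp.le]
      congr 1
      change _ = Real.exp (-(μ h S)) / W S
      field_simp
    rw [this, measure_univ]
  set ρ := Pm.prod (ν ⊗ₘ κ) with hρ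
  have hA2 : ∫⁻ p, A p.2 ∂ρ ≤ 1 := by
    have hA' : Measurable fun p : H × ((Fin m → Z) × H) => A p.2 := hAm.comp measurable_snd
    rw [hρ, lintegral_prod _ hA'.aemeasurable]
    simpa using hAint
  have hB' : Measurable fun p : H × ((Fin m → Z) × H) => B (p.1, p.2.1) :=
    hBm.comp (measurable_fst.prodMk (measurable_fst.comp measurable_snd))
  have hB2 : ∫⁻ p, B (p.1, p.2.1) ∂ρ ≤ 1 := by
    rw [hρ, lintegral_prod_symm _ hB'.aemeasurable]
    calc _ ≤ ∫⁻ _, 1 ∂(ν ⊗ₘ κ) := lintegral_mono fun x => hBint x.1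
      _ = 1 := by simp
  have hsum : ∫⁻ p, (A p.2 + B (p.1, p.2.1)) ∂ρ ≤ 2 := by
    rw [lintegral_add_right _ hB']
    calc _ ≤ (1:ENNReal) + 1 := add_le_add hA2 hB2
      _ = 2 := by norm_num
  have hmk := (mul_meas_ge_le_lintegral (μ := ρ) ((hAm.comp measurable_snd).add hB')
    (ENNReal.ofReal (2/δ))).trans hsum
  set good : Set (H × ((Fin m → Z) × H)) := {p | _} with hgood
  have hsub : goodᶜ ⊆ {p | ENNReal.ofReal (2/δ) ≤ A p.2 + B (p.1, p.2.1)} := by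
    intro p hp
    have hb := catoni_bad hm hc hδ0 (hPpos p.2.2) (hPpos p.1) (hZpos p.2.1) (hq p.2.2) hp
    have hW : 0 < W p.2.1 := hZpos p.2.1
    have e1 := hMpos p.2.2 p.2.1
    have e2 := hPpos p.2.2
    have e3 := hPpos p.1
    simp only [Set.mem_ofPred_eq, hA, hB]
    rw [← ENNReal.ofReal_add (by positivity) (by positivity), hMeq]
    exact ENNReal.ofReal_le_ofReal hb
  have hbadle : ρ goodᶜ ≤ ENNReal.ofReal δ := by
    refine (measure_mono hsub).trans ?_
    have h2 : ENNReal.ofReal (2/δ) * ρ {p | ENNReal.ofReal (2/δ) ≤ A p.2 + B (p.1, p.2.1)} ≤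
        ENNReal.ofReal (2/δ) * ENNReal.ofReal δ := by
      rw [← ENNReal.ofReal_mul (by positivity), div_mul_cancel₀ _ hδ0.ne']
      simpa using hmk
    exact (ENNReal.mul_le_mul_iff_right (by simpa using hδ0) ENNReal.ofReal_ne_top).1 h2
  rw [tsub_le_iff_right]
  calc (1:ENNReal) = ρ Set.univ := by simp
    _ = ρ (good ∪ goodᶜ) := by rw [Set.union_compl_self]
    _ ≤ ρ good + ρ goodᶜ := measure_union_le _ _
    _ ≤ _ := by gcongr
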